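/- Let n ≥ 2 and let G be an acyclic simple graph on Fin n in which every vertex has degree at most 4. Then there exists a matrix X : Matrix (Fin 2) (Fin n) (ZMod 2) of rank 2 such that every column of X is nonzero, for all j, k with G.Adj j k the j-th and k-th columns of X differ, and the number of unordered pairs {j, k} of distinct indices with differing columns equals φ_max = C(n, 2) − v·w − 3·C(v, 2) where v = n / 3 (integer division), w = n % 3 and C(a, 2) = a(a−1)/2. (Equivalently, a 2^n factorial in blocks of size four exists which yields all required estimates and achieves the bound φ_max.) -/

import Mathlib

/-!
Colour each vertex by a nonzero vector of `GF(2)²` and take the colours as the columns of `X`. The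
number of bichromatic pairs is `C(n, 2) - ∑ C(nᵢ, 2)`, where the `nᵢ` are the sizes of the three
colour classes, and it equals `φ_max` when these sizes differ by at most one. So the theorem is the
case `k = 3` of a result going back to Meyer: a forest of maximum degree at most `2 * (k - 1)` has
an equitable `k`-colouring.

That result goes by induction, removing `k` vertices at a time. The colouring of the remaining ones
extends, with `k` different colours on the removed set `t`, as soon as every nonempty `S ⊆ t`
contains a vertex with at most `k - #S` neighbours outside `t`, because this is Hall's condition for
the lists of colours still available. To find `t`, take a vertex `p` all of whose neighbours but at
most one are leaves. If `p` has at least `k - 1` leaf neighbours, then `p` and `k - 1` of them will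
do: the leaves have no neighbour outside `t`, and `p` has at most `k - 1`. Otherwise `p` has degree
at most `k - 1`; take `p`, a leaf attached to it, and then repeatedly a vertex with at most one
neighbour among the vertices left.
-/

open Finset

section Degree

variable {V : Type*} (G : SimpleGraph V) [DecidableRel G.Adj]

/-- The number of neighbours of `v` in the finite set `s`, which need not contain `v`. -/
def degreeIn (s : Finset V) (v : V) : ℕ :=
  #{u ∈ s | G.Adj v u}

/-- The vertices of degree at least two in the subgraph induced on `s`. The other vertices of `s`,
isolated ones included, play the part of leaves. -/
def nonLeaves (s : Finset V) : Finset V :=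
  {v ∈ s | 1 < degreeIn G s v}

variable {G} {s t : Finset V} {p v z : V}

theorem degreeIn_univ [Fintype V] (v : V) : degreeIn G univ v = G.degree v := by
  rw [degreeIn, ← G.neighborFinset_eq_filter, G.card_neighborFinset_eq_degree]

theorem degreeIn_mono (h : s ⊆ t) (v : V) : degreeIn G s v ≤ degreeIn G t v :=
  card_le_card (filter_subset_filter _ h)

theorem degreeIn_eq_zero_iff : degreeIn G s v = 0 ↔ ∀ u ∈ s, ¬ G.Adj v u := by
  rw [degreeIn, card_eq_zero, filter_eq_empty_iff]

theorem degreeIn_sdiff_add_degreeIn [DecidableEq V] (hts : t ⊆ s) (v : V) :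
    degreeIn G (s \ t) v + degreeIn G t v = degreeIn G s v := by
  simp only [degreeIn]
  rw [← card_union_of_disjoint (disjoint_filter_filter sdiff_disjoint), ← filter_union,
    sdiff_union_of_subset hts]

theorem degreeIn_eq_card (ht : ∀ u ∈ t, G.Adj v u) : degreeIn G t v = #t := by
  rw [degreeIn, filter_true_of_mem ht]

theorem eq_of_notMem_nonLeaves (hz : z ∈ s) (hzs : z ∉ nonLeaves G s) (hp : p ∈ s)
    (hzp : G.Adj z p) {u : V} (hu : u ∈ s) (hzu : G.Adj z u) : u = p := by
  have hdeg : degreeIn G s z ≤ 1 := by simpa [nonLeaves, hz] using hzs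
  exact card_le_one.1 hdeg u (mem_filter.2 ⟨hu, hzu⟩) p (mem_filter.2 ⟨hp, hzp⟩)

end Degree

section Forest

variable {V : Type*} {G : SimpleGraph V} [DecidableRel G.Adj] {s : Finset V}

-- The first vertex of a longest path in the induced forest has no neighbour but the second one.
theorem exists_degreeIn_le_one (hG : G.IsAcyclic) (hs : s.Nonempty) :
    ∃ v ∈ s, degreeIn G s v ≤ 1 := by
  have : Nonempty (s : Set V) := hs.to_subtype
  obtain ⟨v, _, path, hpath, hmax⟩ :=
    SimpleGraph.Walk.exists_isPath_forall_isPath_length_le_length (G.induce (s : Set V))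
  have eq_snd (u : (s : Set V)) (hvu : (G.induce (s : Set V)).Adj v u) : u = path.snd := by
    refine (hG.induce _).eq_snd_of_adj_start hpath hvu ?_
    by_contra hu
    simpa using hmax _ _ _ (hpath.cons (h := hvu.symm) hu)
  refine ⟨v, v.2, card_le_one.2 fun a ha b hb => ?_⟩
  rw [mem_filter] at ha hb
  exact congrArg Subtype.val ((eq_snd ⟨a, ha.1⟩ ha.2).trans (eq_snd ⟨b, hb.1⟩ hb.2).symm)

theorem exists_superset_card_eq_degreeIn_le_one [DecidableEq V] (hG : G.IsAcyclic)
    {r : Finset V} (hrs : r ⊆ s) {m : ℕ} (hrm : #r ≤ m) (hms : m ≤ #s) :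
    ∃ t, r ⊆ t ∧ t ⊆ s ∧ #t = m ∧ ∀ v ∈ t \ r, degreeIn G (s \ t) v ≤ 1 := by
  induction m, hrm using Nat.le_induction with
  | base => exact ⟨r, Subset.rfl, hrs, rfl, by simp⟩
  | succ m _ ih =>
    obtain ⟨t, hrt, hts, rfl, ht⟩ := ih (by omega)
    have hne : (s \ t).Nonempty := by
      rw [sdiff_nonempty]
      exact fun hst => by have := card_le_card hst; omega
    obtain ⟨v, hv, hv1⟩ := exists_degreeIn_le_one hG hne
    rw [mem_sdiff] at hv
    have mono (u : V) : degreeIn G (s \ insert v t) u ≤ degreeIn G (s \ t) u :=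
      degreeIn_mono (sdiff_subset_sdiff Subset.rfl (subset_insert v t)) u
    refine ⟨insert v t, hrt.trans (subset_insert v t), insert_subset hv.1 hts,
      card_insert_of_notMem hv.2, fun u hu => (mono u).trans ?_⟩
    rw [mem_sdiff, mem_insert] at hu
    obtain ⟨rfl | hut, hur⟩ := hu
    · exact hv1
    · exact ht u (mem_sdiff.2 ⟨hut, hur⟩)

-- Among the non-leaves choose one with at most one non-leaf neighbour; having degree at least two,
-- it also has a leaf neighbour `z`. When `s` has no non-leaf, every neighbour is a leaf, and for an
-- isolated vertex `p` the choice `z = p` works.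
theorem exists_degreeIn_nonLeaves_le_one (hG : G.IsAcyclic) (hs : s.Nonempty) :
    ∃ p ∈ s, degreeIn G (nonLeaves G s) p ≤ 1 ∧ ∃ z ∈ s, ∀ u ∈ s, G.Adj z u → u = p := by
  have of_leaf {p : V} (hp : p ∈ s) {z : V} (hz : z ∈ s) (hpz : G.Adj p z)
      (hzs : z ∉ nonLeaves G s) : ∃ z ∈ s, ∀ u ∈ s, G.Adj z u → u = p :=
    ⟨z, hz, fun u => eq_of_notMem_nonLeaves hz hzs hp hpz.symm⟩
  obtain hempty | hne := (nonLeaves G s).eq_empty_or_nonempty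
  · obtain ⟨p, hp⟩ := hs
    refine ⟨p, hp, by simp [hempty, degreeIn], ?_⟩
    by_cases! hadj : ∃ z ∈ s, G.Adj p z
    · obtain ⟨z, hz, hpz⟩ := hadj
      exact of_leaf hp hz hpz (by simp [hempty])
    · exact ⟨p, hp, fun u hu hpu => absurd hpu (hadj u hu)⟩
  · obtain ⟨p, hpT, hp1⟩ := exists_degreeIn_le_one hG hne
    obtain ⟨hp, hp2⟩ := mem_filter.1 hpT
    obtain ⟨z, hz, hzT⟩ := exists_mem_notMem_of_card_lt_card (hp1.trans_lt hp2)
    rw [mem_filter] at hz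
    exact ⟨p, hp, hp1, of_leaf hp hz.1 hz.2 fun h => hzT (mem_filter.2 ⟨h, hz.2⟩)⟩

end Forest

section Extension

/-- Whatever colouring with `#t` colours is given on `r`, it leaves enough colours to colour `t`
injectively. Equivalently, `t` has an enumeration `v₁, …, vₖ` in which `vᵢ` has fewer than `i`
neighbours in `r`; quantifying over subsets avoids choosing it. -/
def IsGreedilyExtendable {V : Type*} (G : SimpleGraph V) [DecidableRel G.Adj]
    (r t : Finset V) : Prop :=
  ∀ S ⊆ t, S.Nonempty → ∃ v ∈ S, #S + degreeIn G r v ≤ #t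

variable {V : Type*} {G : SimpleGraph V} [DecidableRel G.Adj] {s : Finset V}

theorem IsGreedilyExtendable.exists_extension {α : Type*} [Fintype α] {r t : Finset V}
    (h : IsGreedilyExtendable G r t) (ht : #t = Fintype.card α) (hrt : Disjoint r t)
    (c : V → α) :
    ∃ c' : V → α, (∀ u ∈ r, c' u = c u) ∧ Set.InjOn c' t ∧
      ∀ v ∈ t, ∀ u ∈ r, G.Adj v u → c' v ≠ c u := by
  classical
  let available (v : t) : Finset α := ({u ∈ r | G.Adj v u}.image c)ᶜ
  have hall (S : Finset t) : #S ≤ #(S.biUnion available) := by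
    obtain rfl | hS := S.eq_empty_or_nonempty
    · simp
    obtain ⟨_, hv, hcard⟩ := h (S.map (.subtype _)) (map_subtype_subset S) hS.map
    obtain ⟨v, hvS, rfl⟩ := mem_map.1 hv
    have hforb : #({u ∈ r | G.Adj v u}.image c) ≤ degreeIn G r v := card_image_le
    calc #S ≤ #(available v) := by
          rw [card_map, Function.Embedding.subtype_apply] at hcard
          rw [card_compl]
          omega
      _ ≤ #(S.biUnion available) := card_le_card (subset_biUnion_of_mem available hvS)
  obtain ⟨f, hf, hfa⟩ := (all_card_le_biUnion_card_iff_exists_injective available).1 hall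
  have apply_mem {v : V} (hv : v ∈ t) : Function.extend Subtype.val f c v = f ⟨v, hv⟩ :=
    Subtype.val_injective.extend_apply f c ⟨v, hv⟩
  refine ⟨Function.extend Subtype.val f c, fun u hu => ?_, fun u hu v hv huv => ?_,
    fun v hv u hu hvu => ?_⟩
  · exact Function.extend_apply' _ _ _ fun ⟨w, hw⟩ => disjoint_left.1 hrt hu (hw ▸ w.2)
  · rw [apply_mem hu, apply_mem hv] at huv
    exact congrArg Subtype.val (hf huv)
  · rw [apply_mem hv]
    exact fun heq => mem_compl.1 (hfa ⟨v, hv⟩)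
      (mem_image.2 ⟨u, mem_filter.2 ⟨hu, hvu⟩, heq.symm⟩)

variable [DecidableEq V]

theorem exists_isGreedilyExtendable_of_leaves {p : V} {L : Finset V} (hp : p ∈ s) (hL : L ⊆ s)
    (hpL : ∀ l ∈ L, G.Adj p l) (hLp : ∀ l ∈ L, ∀ u ∈ s, G.Adj l u → u = p)
    {k : ℕ} (hkL : k ≤ #L) (hd : degreeIn G s p ≤ 2 * k) :
    ∃ t ⊆ s, #t = k + 1 ∧ IsGreedilyExtendable G (s \ t) t := by
  obtain ⟨M, hML, rfl⟩ := exists_subset_card_eq hkL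
  have hpM : p ∉ M := fun h => (hpL p (hML h)).ne rfl
  have hcard : #(insert p M) = #M + 1 := card_insert_of_notMem hpM
  refine ⟨insert p M, insert_subset hp (hML.trans hL), hcard, fun S hS hSne => ?_⟩
  by_cases! hl : ∃ l ∈ S, l ∈ M
  · obtain ⟨l, hlS, hlM⟩ := hl
    have hl0 : degreeIn G (s \ insert p M) l = 0 :=
      degreeIn_eq_zero_iff.2 fun u hu hlu => by
        rw [mem_sdiff, mem_insert, not_or] at hu
        exact hu.2.1 (hLp l (hML hlM) u hu.1 hlu)
    exact ⟨l, hlS, by rw [hl0]; exact card_le_card hS⟩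
  · obtain rfl : S = {p} := hSne.subset_singleton_iff.1 fun v hv =>
      mem_singleton.2 ((mem_insert.1 (hS hv)).resolve_right (hl v hv))
    have hsplit := degreeIn_sdiff_add_degreeIn (G := G) (hML.trans hL) p
    rw [degreeIn_eq_card fun l hl => hpL l (hML hl)] at hsplit
    have hmono : degreeIn G (s \ insert p M) p ≤ degreeIn G (s \ M) p :=
      degreeIn_mono (sdiff_subset_sdiff Subset.rfl (subset_insert p M)) p
    exact ⟨p, mem_singleton_self p, by rw [card_singleton]; omega⟩

theorem exists_isGreedilyExtendable_of_pendant (hG : G.IsAcyclic) {p z : V} (hp : p ∈ s)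
    (hz : z ∈ s) (hzp : ∀ u ∈ s, G.Adj z u → u = p) {k : ℕ} (hk : 2 ≤ k) (hks : k ≤ #s)
    (hd : degreeIn G s p < k) :
    ∃ t ⊆ s, #t = k ∧ IsGreedilyExtendable G (s \ t) t := by
  obtain ⟨t, hpzt, hts, rfl, ht⟩ := exists_superset_card_eq_degreeIn_le_one hG
    (insert_subset hp (singleton_subset_iff.2 hz)) (card_le_two.trans hk) hks
  have hpt : p ∈ t := hpzt (mem_insert_self p {z})
  have hzt : z ∈ t := hpzt (mem_insert_of_mem (mem_singleton_self z))
  refine ⟨t, hts, rfl, fun S hS hSne => ?_⟩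
  by_cases hzS : z ∈ S
  · have hz0 : degreeIn G (s \ t) z = 0 := degreeIn_eq_zero_iff.2 fun u hu hzu =>
      (mem_sdiff.1 hu).2 (hzp u (mem_sdiff.1 hu).1 hzu ▸ hpt)
    exact ⟨z, hzS, by rw [hz0]; exact card_le_card hS⟩
  by_cases! hv : ∃ v ∈ S, v ≠ p
  · obtain ⟨v, hvS, hvp⟩ := hv
    have hv1 : degreeIn G (s \ t) v ≤ 1 := ht v (by grind)
    have hSt : #S < #t := card_lt_card (ssubset_iff_of_subset hS |>.2 ⟨z, hzt, hzS⟩)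
    exact ⟨v, hvS, by omega⟩
  · obtain rfl : S = {p} := hSne.subset_singleton_iff.1 fun v h => mem_singleton.2 (hv v h)
    have := degreeIn_mono (G := G) (sdiff_subset : s \ t ⊆ s) p
    exact ⟨p, mem_singleton_self p, by rw [card_singleton]; omega⟩

theorem exists_isGreedilyExtendable (hG : G.IsAcyclic) {k : ℕ} (hk : k < #s)
    (hd : ∀ v ∈ s, degreeIn G s v ≤ 2 * k) :
    ∃ t ⊆ s, #t = k + 1 ∧ IsGreedilyExtendable G (s \ t) t := by
  obtain ⟨p, hp, hp1, z, hz, hzp⟩ :=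
    exists_degreeIn_nonLeaves_le_one hG (card_pos.1 (Nat.zero_lt_of_lt hk))
  let L : Finset V := {l ∈ s \ nonLeaves G s | G.Adj p l}
  have hL {l : V} (hl : l ∈ L) : (l ∈ s ∧ l ∉ nonLeaves G s) ∧ G.Adj p l := by
    simpa [L] using hl
  by_cases! hkL : k ≤ #L
  · exact exists_isGreedilyExtendable_of_leaves hp (fun l hl => (hL hl).1.1) (fun l hl => (hL hl).2)
      (fun l hl u => eq_of_notMem_nonLeaves (hL hl).1.1 (hL hl).1.2 hp (hL hl).2.symm) hkL (hd p hp)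
  · have hsplit : #L + degreeIn G (nonLeaves G s) p = degreeIn G s p :=
      degreeIn_sdiff_add_degreeIn (filter_subset _ s) p
    exact exists_isGreedilyExtendable_of_pendant hG hp hz hzp (by omega) hk (by omega)

end Extension

section EquitableColoring

variable {V α : Type*} [DecidableEq α] {G : SimpleGraph V}

/-- `c` restricts to a proper colouring of the subgraph induced on `s`, with colour classes in `s`
whose sizes differ by at most one. The values of `c` outside `s` are irrelevant. -/
structure IsEquitableColoringOn (G : SimpleGraph V) (s : Finset V) (c : V → α) : Prop where
  ne_of_adj : ∀ u ∈ s, ∀ v ∈ s, G.Adj u v → c u ≠ c v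
  equitable : Set.univ.EquitableOn fun a => #{v ∈ s | c v = a}

theorem isEquitableColoringOn_of_injOn {s : Finset V} {c : V → α} (hc : Set.InjOn c s) :
    IsEquitableColoringOn G s c where
  ne_of_adj u hu v hv huv := hc.ne hu hv huv.ne
  equitable a b _ _ := by
    have : #{v ∈ s | c v = a} ≤ 1 := card_le_one.2 fun u hu v hv => by
      rw [mem_filter] at hu hv
      exact hc hu.1 hv.1 (hu.2.trans hv.2.symm)
    exact this.trans (Nat.le_add_left 1 _)

theorem card_filter_eq_one_of_injOn [Fintype α] {t : Finset V} {c : V → α} (hc : Set.InjOn c t)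
    (ht : #t = Fintype.card α) (a : α) : #{v ∈ t | c v = a} = 1 := by
  obtain ⟨v, hv, rfl⟩ := surjOn_of_injOn_of_card_le c (fun _ _ => mem_univ _) hc ht.ge (mem_univ a)
  exact card_eq_one.2 ⟨v, by ext u; grind [Set.InjOn]⟩

variable [DecidableRel G.Adj] {r t : Finset V}

theorem IsEquitableColoringOn.exists_union [Fintype α] [DecidableEq V] {c : V → α}
    (hc : IsEquitableColoringOn G r c) (h : IsGreedilyExtendable G r t) (ht : #t = Fintype.card α)
    (hrt : Disjoint r t) : ∃ c' : V → α, IsEquitableColoringOn G (r ∪ t) c' := by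
  obtain ⟨c', hr, hinj, hne⟩ := h.exists_extension ht hrt c
  have card_class (a : α) : #{v ∈ r ∪ t | c' v = a} = #{v ∈ r | c v = a} + 1 := by
    rw [filter_union, card_union_of_disjoint (disjoint_filter_filter hrt),
      card_filter_eq_one_of_injOn hinj ht, filter_congr fun v hv => by rw [hr v hv]]
  refine ⟨c', ⟨fun u hu v hv huv => ?_, fun a b ha hb => ?_⟩⟩
  · obtain hu | hu := mem_union.1 hu <;> obtain hv | hv := mem_union.1 hv
    · rw [hr u hu, hr v hv]
      exact hc.ne_of_adj u hu v hv huv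
    · rw [hr u hu]
      exact (hne v hv u hu huv.symm).symm
    · rw [hr v hv]
      exact hne u hu v hv huv
    · exact hinj.ne hu hv huv.ne
  · simpa only [card_class, Nat.add_le_add_iff_right] using hc.equitable ha hb

theorem exists_isEquitableColoringOn [Fintype α] [Nonempty α] (hG : G.IsAcyclic) (s : Finset V)
    (hd : ∀ v ∈ s, degreeIn G s v ≤ 2 * (Fintype.card α - 1)) :
    ∃ c : V → α, IsEquitableColoringOn G s c := by
  classical
  induction s using Finset.strongInduction with
  | H s ih =>
  have hα : 0 < Fintype.card α := Fintype.card_pos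
  by_cases! hs : #s < Fintype.card α
  · obtain ⟨c, -, hc⟩ := s.finite_toSet.exists_injOn_of_encard_le (t := (Set.univ : Set α))
      (by simpa using mod_cast hs.le)
    exact ⟨c, isEquitableColoringOn_of_injOn hc⟩
  · obtain ⟨t, hts, ht, hext⟩ := exists_isGreedilyExtendable hG (by omega) hd
    have htne : t.Nonempty := card_pos.1 (by omega)
    obtain ⟨c, hc⟩ := ih (s \ t) (sdiff_ssubset hts htne) fun v hv =>
      (degreeIn_mono sdiff_subset v).trans (hd v (mem_sdiff.1 hv).1)
    rw [← sdiff_union_of_subset hts]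
    exact hc.exists_union hext (by omega) sdiff_disjoint

theorem exists_equitable_coloring [Fintype V] [Fintype α] [Nonempty α] (hG : G.IsAcyclic)
    (hd : ∀ v, G.degree v ≤ 2 * (Fintype.card α - 1)) :
    ∃ c : G.Coloring α, Set.univ.EquitableOn fun a => #{v | c v = a} := by
  obtain ⟨c, hc⟩ := exists_isEquitableColoringOn hG univ fun v _ =>
    (degreeIn_univ v).trans_le (hd v)
  exact ⟨.mk c fun {u v} => hc.ne_of_adj u (mem_univ u) v (mem_univ v), hc.equitable⟩

end EquitableColoring

section Counting

theorem sum_choose_two_of_equitableOn {ι : Type*} {s : Finset ι} {f : ι → ℕ}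
    (hf : (s : Set ι).EquitableOn f) :
    ∑ i ∈ s, (f i).choose 2 =
      (∑ i ∈ s, f i) / #s * ((∑ i ∈ s, f i) % #s) + #s * ((∑ i ∈ s, f i) / #s).choose 2 := by
  set m := ∑ i ∈ s, f i
  set q := m / #s
  have eq_or (i : ι) (hi : i ∈ s) : f i = q ∨ f i = q + 1 := equitableOn_iff.1 hf i hi
  have excess : ∑ i ∈ s, (f i - q) = m % #s := by
    have : ∑ i ∈ s, (f i - q) + #s * q = m := by
      rw [← smul_eq_mul, ← sum_const, ← sum_add_distrib]
      exact sum_congr rfl fun i hi => by have := eq_or i hi; omega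
    have : #s * q + m % #s = m := Nat.div_add_mod m #s
    omega
  have choose_eq (i : ι) (hi : i ∈ s) : (f i).choose 2 = q * (f i - q) + q.choose 2 := by
    obtain h | h := eq_or i hi <;> simp [h, Nat.choose_succ_succ' q 1]
  rw [sum_congr rfl choose_eq, sum_add_distrib, ← mul_sum, excess, sum_const, smul_eq_mul]

variable {V α : Type*} [Fintype V] [DecidableEq α]

theorem card_lt_ne_add_sum_choose_two [LinearOrder V] [Fintype α] (c : V → α) :
    #{p : V × V | p.1 < p.2 ∧ c p.1 ≠ c p.2} + ∑ a, (#{v | c v = a}).choose 2 =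
      (Fintype.card V).choose 2 := by
  have monochromatic :
      #{p : V × V | p.1 < p.2 ∧ c p.1 = c p.2} = ∑ a, (#{v | c v = a}).choose 2 := by
    rw [card_eq_sum_card_fiberwise (f := fun p => c p.1) (t := univ) fun _ _ => by simp]
    refine sum_congr rfl fun a _ => ?_
    rw [← card_product_filter_lt]
    congr 1
    grind
  rw [← monochromatic, ← card_univ, ← card_product_filter_lt, add_comm, univ_product_univ,
    ← filter_filter, ← filter_filter, card_filter_add_card_filter_not]

theorem card_lt_ne_of_equitableOn [LinearOrder V] [Fintype α] {c : V → α}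
    (hc : Set.univ.EquitableOn fun a => #{v | c v = a}) :
    #{p : V × V | p.1 < p.2 ∧ c p.1 ≠ c p.2} =
      (Fintype.card V).choose 2
        - Fintype.card V / Fintype.card α * (Fintype.card V % Fintype.card α)
        - Fintype.card α * (Fintype.card V / Fintype.card α).choose 2 := by
  have hsum : ∑ a, #{v | c v = a} = Fintype.card V :=
    (card_eq_sum_card_fiberwise fun _ _ => by simp).symm
  have hchoose := sum_choose_two_of_equitableOn (coe_univ (α := α) ▸ hc)
  rw [hsum, card_univ] at hchoose
  have := card_lt_ne_add_sum_choose_two c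
  omega

theorem exists_ne_of_equitableOn [Nontrivial V] [Nontrivial α] {c : V → α}
    (hc : Set.univ.EquitableOn fun a => #{v | c v = a}) : ∃ u v, c u ≠ c v := by
  by_contra! hconst
  obtain ⟨v⟩ := (inferInstance : Nonempty V)
  obtain ⟨b, hb⟩ := exists_ne (c v)
  have hle : #{u | c u = c v} ≤ #{u | c u = b} + 1 := hc (Set.mem_univ _) (Set.mem_univ _)
  rw [filter_true_of_mem fun u _ => hconst u v,
    filter_false_of_mem fun u _ => hconst u v ▸ hb.symm, card_univ, card_empty] at hle
  exact hle.not_gt Fintype.one_lt_card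

end Counting

section Rank

theorem linearIndependent_pair_zmod_two {M : Type*} [AddCommGroup M] [Module (ZMod 2) M] {x y : M}
    (hx : x ≠ 0) (hy : y ≠ 0) (hxy : x ≠ y) : LinearIndependent (ZMod 2) ![x, y] := by
  rw [LinearIndependent.pair_iff' hx]
  intro a
  obtain rfl | rfl : a = 0 ∨ a = 1 := by revert a; decide
  · rwa [zero_smul, ne_comm]
  · rwa [one_smul]

theorem rank_eq_card_of_linearIndependent_col_comp {K m ι : Type*} [Field K] [Fintype m] [Fintype ι]
    {X : Matrix m ι K} {e : m → ι} (h : LinearIndependent K (X.col ∘ e)) :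
    X.rank = Fintype.card m := by
  refine le_antisymm X.rank_le_card_height ?_
  rw [← finrank_span_eq_card h, X.rank_eq_finrank_span_cols]
  exact Submodule.finrank_mono (Submodule.span_mono (Set.range_comp_subset_range e X.col))

end Rank

/-- Corollary 4: if the requirements graph `G` is acyclic with every vertex of degree
at most 4, then a `2^n` factorial in blocks of size four exists which yields all
required estimates and achieves the bound `φ_max = C(n,2) - v·w - 3·C(v,2)` with
`v = n / 3`, `w = n % 3`. -/
theorem stmt12 (n : ℕ) (hn : 2 ≤ n)
    (G : SimpleGraph (Fin n)) [DecidableRel G.Adj]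
    (hG : G.IsAcyclic)
    (hd : ∀ v : Fin n, G.degree v ≤ 4) :
    ∃ X : Matrix (Fin 2) (Fin n) (ZMod 2),
      X.rank = 2 ∧
      (∀ j : Fin n, (fun i => X i j) ≠ 0) ∧
      (∀ j k : Fin n, G.Adj j k → (fun i => X i j) ≠ (fun i => X i k)) ∧
      (Finset.univ.filter
          (fun p : Fin n × Fin n =>
            p.1 < p.2 ∧ (fun i => X i p.1) ≠ (fun i => X i p.2))).card =
        Nat.choose n 2 - (n / 3) * (n % 3) - 3 * Nat.choose (n / 3) 2 := by
  have card_nonzero : Fintype.card {x : Fin 2 → ZMod 2 // x ≠ 0} = 3 := by decide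
  have : Nontrivial (Fin n) := Fin.nontrivial_iff_two_le.2 hn
  have : Nontrivial {x : Fin 2 → ZMod 2 // x ≠ 0} :=
    Fintype.one_lt_card_iff_nontrivial.1 (by omega)
  obtain ⟨c, hc⟩ := exists_equitable_coloring (α := {x : Fin 2 → ZMod 2 // x ≠ 0}) hG
    (by simpa only [card_nonzero] using hd)
  obtain ⟨j, k, hjk⟩ := exists_ne_of_equitableOn hc
  have hcount := card_lt_ne_of_equitableOn hc
  simp only [Fintype.card_fin, card_nonzero, ne_eq, Subtype.ext_iff] at hcount
  refine ⟨.of fun i j => (c j).1 i, ?_, fun j => (c j).2,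
    fun j k hadj => Subtype.coe_ne_coe.2 (c.valid hadj), hcount⟩
  have hli := linearIndependent_pair_zmod_two (c j).2 (c k).2 (Subtype.coe_ne_coe.2 hjk)
  rw [rank_eq_card_of_linearIndependent_col_comp (e := ![j, k]) (by rwa [← FinVec.map_eq]),
    Fintype.card_fin]
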